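/- Let L ≥ 1, 1 ≤ j ≤ L-1, and 0 ≤ q ≤ L. Consider the product of Kronecker deltas G = Π_{m=q+1}^{L} δ_{s_m, s_{m+j}} over binary variables s_1,...,s_L with indices mod L. Then Σ_{s_1,...,s_L ∈ {0,1}} Π_{m=q+1}^{L} δ_{s_m, s_{m+j}} = 2^{max{q, gcd(j,L)}}. -/

import Mathlib

/-!
The constraints are read along the orbits of the translation `T m = m + j` on `ZMod L`: outside
`A = {1, …, q}` a string takes the same value at `m` and at `T m`. The `T`-orbits are the residue
classes modulo `g = gcd(j, L)`.

If `g ≤ q`, every forward orbit meets `A`, so a solution is determined by its restriction to `A`,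
and the restriction is arbitrary: each value of `A → Bool` extends by assigning to `m` the value at
the first point of `A` on the forward orbit of `m` (`card_solutions`). This gives `2 ^ q` solutions.

If `q < g`, the solutions for `{1, …, q}` coincide with those for `{1, …, g}`: each orbit meets
`{1, …, g}` in a single point, so only one constraint per cycle is dropped, and it follows from
the others (`eq_next_of_unique_hit`). This reduces to the first case with `q = g`.
-/

/-- A string that is `T`-invariant off `A` agrees at `x` with its value at some point of `A` on the
forward orbit of `x`, provided that orbit meets `A`. -/
lemma exists_hit_eq {X : Type*} (T : X → X) (A : Finset X) (s : X → Bool)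
    (hs : ∀ m, m ∉ A → s m = s (T m)) (n : ℕ) :
    ∀ x, T^[n] x ∈ A → ∃ k, T^[k] x ∈ A ∧ s x = s (T^[k] x) := by
  induction n with
  | zero => exact fun x hx => ⟨0, hx, rfl⟩
  | succ n ih =>
    intro x hx
    by_cases hxA : x ∈ A
    · exact ⟨0, hxA, rfl⟩
    · obtain ⟨k, hk, hk'⟩ := ih (T x) hx
      exact ⟨k + 1, hk, (hs x hxA).trans hk'⟩

/-- If every orbit that starts in `A` returns to `A` only at its starting point, the constraints
off `A` force `T`-invariance on `A` as well. -/
lemma eq_next_of_unique_hit {X : Type*} (T : X → X) (A : Finset X)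
    (hit : ∀ x, ∃ n, T^[n] x ∈ A) (huniq : ∀ x ∈ A, ∀ n, T^[n] x ∈ A → T^[n] x = x)
    (s : X → Bool) (hs : ∀ m, m ∉ A → s m = s (T m)) (m : X) : s m = s (T m) := by
  by_cases hm : m ∈ A
  · obtain ⟨n, hn⟩ := hit (T m)
    obtain ⟨k, hk, hk'⟩ := exists_hit_eq T A s hs n (T m) hn
    have h : T^[k] (T m) = m := huniq m hm (k + 1) hk
    rw [hk', h]
  · exact hs m hm

/-- If every forward orbit of `T` meets `A`, restriction to `A` is a bijection from the strings
that are `T`-invariant off `A` to `A → Bool`. -/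
lemma card_solutions {X : Type*} (T : X → X) (A : Finset X)
    (hit : ∀ x, ∃ n, T^[n] x ∈ A) :
    Nat.card {s : X → Bool // ∀ m, m ∉ A → s m = s (T m)} = 2 ^ A.card := by
  classical
  have hbij : Function.Bijective
      (fun (s : {s : X → Bool // ∀ m, m ∉ A → s m = s (T m)}) (a : A) => s.1 a) := by
    constructor
    · rintro ⟨s, hs⟩ ⟨t, ht⟩ hst
      have hA : ∀ a ∈ A, s a = t a := fun a ha => congrFun hst ⟨a, ha⟩
      have key : ∀ n x, T^[n] x ∈ A → s x = t x := by
        intro n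
        induction n with
        | zero => exact fun x hx => hA x hx
        | succ n ih =>
          intro x hx
          by_cases hxA : x ∈ A
          · exact hA x hxA
          · rw [hs x hxA, ht x hxA]
            exact ih (T x) hx
      ext x
      obtain ⟨n, hn⟩ := hit x
      simp only [key n x hn]
    · intro f
      refine ⟨⟨fun x => f ⟨T^[Nat.find (hit x)] x, Nat.find_spec (hit x)⟩, ?_⟩, ?_⟩
      · intro m hm
        have h : Nat.find (hit m) = Nat.find (hit (T m)) + 1 :=
          Nat.find_comp_succ (hit m) (hit (T m)) hm
        refine congrArg f (Subtype.ext ?_)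
        change T^[Nat.find (hit m)] m = T^[Nat.find (hit (T m))] (T m)
        rw [h, Function.iterate_succ_apply]
      · funext a
        have h : Nat.find (hit a.1) = 0 := (Nat.find_eq_zero _).2 a.2
        simp [h]
  rw [Nat.card_congr (Equiv.ofBijective _ hbij)]
  simp [Nat.card_eq_fintype_card]

lemma iterate_add_const (L j n : ℕ) (x : ZMod L) :
    (fun m : ZMod L => m + (j : ZMod L))^[n] x = x + n * j := by
  induction n with
  | zero => simp
  | succ n ih => rw [Function.iterate_succ_apply', ih]; push_cast; ring

lemma orbit_hits (L j q : ℕ) (hL : 1 ≤ L) (hg : Nat.gcd j L ≤ q) (x : ZMod L) :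
    ∃ n, (fun m : ZMod L => m + (j : ZMod L))^[n] x ∈
      (Finset.Icc 1 q).image (Nat.cast : ℕ → ZMod L) := by
  have : NeZero L := ⟨by omega⟩
  have hg0 : (0 : ℤ) < (Nat.gcd j L : ℤ) := by
    exact_mod_cast Nat.gcd_pos_of_pos_right j (by omega)
  -- The representative of `x` modulo `gcd(j, L)` in `{1, …, gcd(j, L)}` is `r + 1`.
  obtain ⟨r, hr⟩ := Int.eq_ofNat_of_zero_le (Int.emod_nonneg ((x.val : ℤ) - 1) hg0.ne')
  have hrlt := Int.emod_lt_of_pos ((x.val : ℤ) - 1) hg0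
  have hdiv := Int.emod_add_mul_ediv ((x.val : ℤ) - 1) (Nat.gcd j L)
  set t := ((x.val : ℤ) - 1) / (Nat.gcd j L : ℤ)
  rw [hr] at hrlt hdiv
  have hbez : ((Nat.gcd j L : ℤ) : ZMod L) = j * (Nat.gcdA j L : ZMod L) := by
    rw [Nat.gcd_eq_gcd_ab]; simp
  have hx : x = (r : ZMod L) + 1 + j * (Nat.gcdA j L : ZMod L) * (t : ZMod L) := by
    have h := congrArg (Int.cast : ℤ → ZMod L) hdiv
    rw [Int.cast_add, Int.cast_mul, hbez] at h
    simp only [Int.cast_natCast, Int.cast_sub, ZMod.natCast_zmod_val, Int.cast_one] at h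
    linear_combination -h
  refine ⟨(-((Nat.gcdA j L : ZMod L) * (t : ZMod L))).val, ?_⟩
  rw [iterate_add_const, Finset.mem_image]
  refine ⟨r + 1, Finset.mem_Icc.2 ⟨by omega, by omega⟩, ?_⟩
  rw [ZMod.natCast_val, ZMod.cast_id', id_eq]
  push_cast
  linear_combination -hx

lemma orbit_unique_hit (L j : ℕ) (x : ZMod L)
    (hx : x ∈ (Finset.Icc 1 (Nat.gcd j L)).image (Nat.cast : ℕ → ZMod L)) (n : ℕ)
    (hn : (fun m : ZMod L => m + (j : ZMod L))^[n] x ∈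
      (Finset.Icc 1 (Nat.gcd j L)).image (Nat.cast : ℕ → ZMod L)) :
    (fun m : ZMod L => m + (j : ZMod L))^[n] x = x := by
  obtain ⟨a, ha, rfl⟩ := Finset.mem_image.1 hx
  obtain ⟨b, hb, hab⟩ := Finset.mem_image.1 hn
  rw [← hab]
  rw [iterate_add_const] at hab
  rw [Finset.mem_Icc] at ha hb
  have h1 : b ≡ a + n * j [MOD L] := by
    rw [← ZMod.natCast_eq_natCast_iff]; push_cast; exact hab
  have h2 : b ≡ a [MOD Nat.gcd j L] := by
    refine (h1.of_dvd (Nat.gcd_dvd_right j L)).trans ?_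
    have h0 : n * j ≡ 0 [MOD Nat.gcd j L] :=
      (Nat.modEq_zero_iff_dvd).2 ((Nat.gcd_dvd_left j L).mul_left n)
    simpa using h0.add_left a
  have h3 : b - 1 ≡ a - 1 [MOD Nat.gcd j L] := by
    apply Nat.ModEq.add_right_cancel' 1
    rwa [Nat.sub_add_cancel hb.1, Nat.sub_add_cancel ha.1]
  have h4 : b - 1 = a - 1 := h3.eq_of_lt_of_lt (by omega) (by omega)
  have h5 : b = a := by omega
  rw [h5]

lemma card_image_Icc (L q : ℕ) (hq : q ≤ L) :
    ((Finset.Icc 1 q).image (Nat.cast : ℕ → ZMod L)).card = q := by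
  rw [Finset.card_image_of_injOn]
  · simp
  · intro a ha b hb hab
    simp only [Finset.coe_Icc, Set.mem_Icc] at ha hb
    have h1 : a ≡ b [MOD L] := (ZMod.natCast_eq_natCast_iff _ _ _).1 hab
    have h3 : a - 1 ≡ b - 1 [MOD L] := by
      apply Nat.ModEq.add_right_cancel' 1
      rwa [Nat.sub_add_cancel hb.1, Nat.sub_add_cancel ha.1]
    have h4 := h3.eq_of_lt_of_lt (by omega) (by omega)
    omega

/-- For `L ≥ 1`, `1 ≤ j ≤ L-1`, `0 ≤ q ≤ L`: the number of binary strings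
`s : ZMod L → Bool` satisfying `s(m) = s(m+j)` for all sites `m` outside
`{1,…,q}` equals `2^{max{q, gcd(j,L)}}`. Equivalently,
`Σ_{s} Π_{m=q+1}^{L} δ_{s_m, s_{m+j}} = 2^{max{q, gcd(j,L)}}`. -/
theorem delta_product_count (L j q : ℕ) (hL : 1 ≤ L) (hj : 1 ≤ j) (hjL : j ≤ L - 1)
    (hq : q ≤ L) :
    Nat.card {s : ZMod L → Bool //
        ∀ m : ZMod L, m ∉ (Finset.Icc 1 q).image (Nat.cast : ℕ → ZMod L) →
          s m = s (m + (j : ZMod L))} =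
      2 ^ max q (Nat.gcd j L) := by
  have main : ∀ p, Nat.gcd j L ≤ p → p ≤ L → Nat.card {s : ZMod L → Bool //
        ∀ m : ZMod L, m ∉ (Finset.Icc 1 p).image (Nat.cast : ℕ → ZMod L) →
          s m = s (m + (j : ZMod L))} = 2 ^ p := by
    intro p hp hpL
    have h := card_solutions (fun m : ZMod L => m + (j : ZMod L)) _ (orbit_hits L j p hL hp)
    rwa [card_image_Icc L p hpL] at h
  rcases le_total (Nat.gcd j L) q with h | h
  · rw [max_eq_left h]
    exact main q h hq
  · rw [max_eq_right h, ← main _ le_rfl ((Nat.gcd_le_left L hj).trans (by omega))]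
    refine Nat.card_congr (Equiv.subtypeEquivRight fun s => ⟨fun hs m hm => hs m ?_, ?_⟩)
    · exact fun hm' => hm (Finset.image_subset_image (Finset.Icc_subset_Icc_right h) hm')
    · exact fun hs m _ => eq_next_of_unique_hit (fun m : ZMod L => m + (j : ZMod L)) _
        (orbit_hits L j _ hL le_rfl) (orbit_unique_hit L j) s hs m
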